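/- Let X be a Cantor space and K a dynamical simplex on X. Given any KR-partition T for K and clopen subsets U, V of X with U ∼_K V, there exists a KR-partition S for K which refines T, is compatible with U and with V (i.e., each of U and V is a union of atoms of S), and is such that in each column of S the number of atoms contained in U equals the number of atoms contained in V. -/

import Mathlib

/-!
Cut the columns of `T` until they are compatible with `U` and `V`. Give each resulting column `c`
its imbalance `n(c)`, the number of its atoms contained in `U` minus the number of those contained
in `V`. Since `U ∼ V`, the relation `∑ n(c) μ(c) = 0` holds for every `μ ∈ K`, where `μ(c)` is the
common measure of the atoms of `c`. It remains to cut and stack until every imbalance is zero; this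
is the argument by which relations between positive elements are resolved in an unperforated group
with the Riesz property.

Let `M` be the maximum of `|n(c)|` and suppose that `n(p) = M > 0` (if `n(p) = -M`, exchange `U`
and `V`). Let `J` be the set of columns with negative imbalance and `Y` the union of their bases.
The relation gives `M μ(p) ≤ M μ(Y)` for every `μ ∈ K`. If equality holds for one `μ`, then by full
support the terms lost in the inequality vanish for all `μ`, so equality holds throughout `K`;
otherwise the inequality is strict throughout and goodness applies. Either way `p` is
`K`-equivalent to a clopen `C ⊆ Y` (`step`). Cut `p` into pieces equivalent to the sets
`C ∩ base q`, `q ∈ J`, cut each `q` accordingly, and stack the matching pieces (`stack`). The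
stacked columns have imbalance `M + n(q)`, which lies in `[0, M)`, and the remainders of the
columns `q` keep their imbalance `n(q)`, so there is one column fewer with `|n| = M`. Induction on
`M` and on the number of such columns concludes (`exists_balanced`).

Columns are handled as lists of labelled sets, so that stacking is concatenation and the partition
property says that each point has multiplicity one in the concatenation of all columns. Empty
columns are allowed throughout: their imbalance is zero.
-/

open MeasureTheory

namespace DynSimplex

variable {X : Type*} [TopologicalSpace X] [MeasurableSpace X] [OpensMeasurableSpace X]

/-- `g` preserves the probability measure `μ`, i.e. `g_*μ = μ`. -/
def Preserves (g : X ≃ₜ X) (μ : ProbabilityMeasure X) : Prop :=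
  (μ : Measure X).map g = (μ : Measure X)

/-- A homeomorphism is minimal if all of its (two-sided) orbits are dense. -/
def IsMinimal (g : X ≃ₜ X) : Prop :=
  ∀ x : X, Dense (Set.range fun n : ℤ => (g.toEquiv ^ n) x)

/-- A set of probability measures is good if for all clopen `A`, `B` with `μ A < μ B` for
all `μ ∈ K`, there is a clopen `C ⊆ B` with `μ C = μ A` for all `μ ∈ K`. -/
def Good (K : Set (ProbabilityMeasure X)) : Prop :=
  ∀ A B : Set X, IsClopen A → IsClopen B → (∀ μ ∈ K, μ A < μ B) →
    ∃ C : Set X, IsClopen C ∧ C ⊆ B ∧ ∀ μ ∈ K, μ C = μ A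

/-- Approximate divisibility of a set of probability measures. -/
def ApproximatelyDivisible (K : Set (ProbabilityMeasure X)) : Prop :=
  ∀ A : Set X, IsClopen A → ∀ n : ℕ, 1 ≤ n → ∀ ε : ℝ, 0 < ε →
    ∃ B : Set X, IsClopen B ∧ B ⊆ A ∧
      ∀ μ ∈ K, (μ A : ℝ) - ε ≤ (n : ℝ) * (μ B : ℝ) ∧ (n : ℝ) * (μ B : ℝ) ≤ (μ A : ℝ)

/-- A probability measure has full support if every nonempty open set has positive measure. -/
def FullSupport (μ : ProbabilityMeasure X) : Prop :=
  ∀ U : Set X, IsOpen U → U.Nonempty → 0 < μ U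

/-- A probability measure is atomless if all singletons are null. -/
def Atomless (μ : ProbabilityMeasure X) : Prop :=
  ∀ x : X, μ {x} = 0

/-- Convexity of a set of probability measures (as a subset of the `ℝ≥0`-module of
finite measures). -/
def ProbConvex (K : Set (ProbabilityMeasure X)) : Prop :=
  Convex NNReal (ProbabilityMeasure.toFiniteMeasure '' K)

/-- The set of extreme points of a set of probability measures. -/
def ProbExtremePoints (K : Set (ProbabilityMeasure X)) : Set (ProbabilityMeasure X) :=
  ProbabilityMeasure.toFiniteMeasure ⁻¹'
    (Set.extremePoints NNReal (ProbabilityMeasure.toFiniteMeasure '' K))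

/-- A dynamical simplex: a nonempty compact convex set of atomless, fully supported
probability measures which is good and approximately divisible. -/
def DynamicalSimplex (K : Set (ProbabilityMeasure X)) : Prop :=
  K.Nonempty ∧ IsCompact K ∧ ProbConvex K ∧
    (∀ μ ∈ K, Atomless μ ∧ FullSupport μ) ∧ Good K ∧ ApproximatelyDivisible K

/-- Membership in the full group of `g`. -/
def InFullGroup (g h : X ≃ₜ X) : Prop :=
  ∀ x : X, ∃ n : ℤ, h x = (g.toEquiv ^ n) x

/-- Membership in the topological full group of `g`: `h` is given piecewise by powers of `g`
on a finite clopen partition of `X`. -/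
def InTopologicalFullGroup (g h : X ≃ₜ X) : Prop :=
  ∃ (k : ℕ) (A : Fin k → Set X) (n : Fin k → ℤ),
    (∀ i, IsClopen (A i)) ∧ (∀ x : X, ∃! i, x ∈ A i) ∧
    ∀ i, ∀ x ∈ A i, h x = (g.toEquiv ^ (n i)) x

/-- `g` preserves every measure in `K` (i.e. `g` belongs to the group `G`). -/
def PreservesAll (K : Set (ProbabilityMeasure X)) (g : X ≃ₜ X) : Prop :=
  ∀ μ ∈ K, Preserves g μ

/-- `g` is `K`-saturated: any two `K`-equivalent clopen sets are mapped one to the other by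
an element of the topological full group of `g`. -/
def KSaturated (K : Set (ProbabilityMeasure X)) (g : X ≃ₜ X) : Prop :=
  ∀ U V : Set X, IsClopen U → IsClopen V → (∀ μ ∈ K, μ U = μ V) →
    ∃ h : X ≃ₜ X, InTopologicalFullGroup g h ∧ h '' U = V

/-- The topology of uniform convergence on the homeomorphism group of a compact space
(the compact-open topology, induced from `C(X, X)`). -/
instance : TopologicalSpace (X ≃ₜ X) :=
  TopologicalSpace.induced (fun h : X ≃ₜ X => (h : C(X, X))) inferInstance

/-- A KR-partition for `K`: a finite family of columns, each column being a finite sequence of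
clopen sets which are all `K`-equivalent, the atoms of all columns forming a partition of `X`. -/
structure KRPartition (X : Type*) [TopologicalSpace X] [MeasurableSpace X]
    (K : Set (ProbabilityMeasure X)) where
  numCols : ℕ
  height : Fin numCols → ℕ
  atom : (i : Fin numCols) → Fin (height i + 1) → Set X
  clopen : ∀ i j, IsClopen (atom i j)
  equivK : ∀ i j j', ∀ μ ∈ K, μ (atom i j) = μ (atom i j')
  partition : ∀ x : X, ∃! p : (i : Fin numCols) × Fin (height i + 1), x ∈ atom p.1 p.2

/-- The base of a KR-partition: the union of the first atoms of the columns. -/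
def KRPartition.base {K : Set (ProbabilityMeasure X)} (T : KRPartition X K) : Set X :=
  ⋃ i, T.atom i 0

/-- The top of a KR-partition: the union of the last atoms of the columns. -/
def KRPartition.top {K : Set (ProbabilityMeasure X)} (T : KRPartition X K) : Set X :=
  ⋃ i, T.atom i (Fin.last _)

/-- `S` refines `T`: the base (resp. top) of `S` is contained in the base (resp. top) of `T`,
and every column of `S` is obtained by cutting and stacking columns of `T`. -/
def KRPartition.Refines {K : Set (ProbabilityMeasure X)} (S T : KRPartition X K) : Prop :=
  S.base ⊆ T.base ∧ S.top ⊆ T.top ∧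
  ∀ c : Fin S.numCols, ∃ (m : ℕ) (idx : Fin (m + 1) → Fin T.numCols)
    (piece : (k : Fin (m + 1)) → Fin (T.height (idx k) + 1) → Set X),
    (∀ k j, piece k j ⊆ T.atom (idx k) j) ∧
    (S.height c + 1 = ∑ k : Fin (m + 1), (T.height (idx k) + 1)) ∧
    ∀ (k : Fin (m + 1)) (j : Fin (T.height (idx k) + 1))
      (hlt : (∑ l ∈ Finset.Iio k, (T.height (idx l) + 1)) + (j : ℕ) < S.height c + 1),
      S.atom c ⟨(∑ l ∈ Finset.Iio k, (T.height (idx l) + 1)) + (j : ℕ), hlt⟩ = piece k j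

/-- A KR-partition is compatible with a clopen set `U` if `U` is a union of its atoms,
equivalently every atom is either contained in `U` or disjoint from it. -/
def KRPartition.Compatible {K : Set (ProbabilityMeasure X)} (S : KRPartition X K)
    (U : Set X) : Prop :=
  ∀ i j, S.atom i j ⊆ U ∨ Disjoint (S.atom i j) U

end DynSimplex

namespace DynSimplex

/-! ### Lists of labelled sets -/

open Classical in
/-- The number of sets in a list of labelled sets which contain the point `x`. -/
noncomputable def mult {L X : Type*} (x : X) (c : List (L × Set X)) : ℕ :=
  c.countP (fun a => decide (x ∈ a.2))

open Classical in
/-- The number of sets in a list of labelled sets which are contained in `U`. -/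
noncomputable def numIn {L X : Type*} (U : Set X) (c : List (L × Set X)) : ℕ :=
  c.countP (fun a => decide (a.2 ⊆ U))

/-- The imbalance of a column: the number of its atoms contained in `U`, minus the number of its
atoms contained in `V`. Empty atoms contribute to both counts. -/
noncomputable def bal {L X : Type*} (U V : Set X) (c : List (L × Set X)) : ℤ :=
  (numIn U c : ℤ) - numIn V c

/-- Every set in the list is either contained in `W` or disjoint from `W`. -/
def Comp {L X : Type*} (W : Set X) (c : List (L × Set X)) : Prop :=
  ∀ a ∈ c, a.2 ⊆ W ∨ Disjoint a.2 W

/-- Replace every set `A` in the list by `f A`, keeping the labels. -/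
def cutBy {L X : Type*} (f : Set X → Set X) (c : List (L × Set X)) : List (L × Set X) :=
  c.map fun a => (a.1, f a.2)

section Lists

variable {L X : Type*} {U V W : Set X} {c d : List (L × Set X)} {f : Set X → Set X}

theorem mult_append (x : X) : mult x (c ++ d) = mult x c + mult x d := by
  simp [mult]

theorem bal_append : bal U V (c ++ d) = bal U V c + bal U V d := by
  simp only [bal, numIn, List.countP_append]; push_cast; ring

theorem mem_cutBy {b : L × Set X} :
    b ∈ cutBy f c ↔ ∃ a ∈ c, (a.1, f a.2) = b := by
  simp [cutBy]

theorem forall_mem_cutBy {P : L × Set X → Prop} :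
    (∀ b ∈ cutBy f c, P b) ↔ ∀ a ∈ c, P (a.1, f a.2) := by
  simp only [mem_cutBy]
  constructor
  · intro h a ha
    exact h _ ⟨a, ha, rfl⟩
  · rintro h _ ⟨a, ha, rfl⟩
    exact h a ha

theorem map_fst_cutBy : (cutBy f c).map Prod.fst = c.map Prod.fst := by
  simp [cutBy]

theorem mult_cutBy (hf : ∀ a ∈ c, f a.2 ⊆ a.2) (x : X) :
    mult x (cutBy f c) + mult x (cutBy (fun A => A \ f A) c) = mult x c := by
  induction c with
  | nil => simp [mult, cutBy]
  | cons a c ih =>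
    have h1 := ih (fun b hb => hf b (List.mem_cons_of_mem _ hb))
    have h2 := @hf a (by simp) x
    simp only [mult, cutBy, List.map_cons, List.countP_cons, decide_eq_true_eq,
      Set.mem_sdiff] at h1 ⊢
    rw [← h1]
    by_cases hx : x ∈ a.2 <;> by_cases hy : x ∈ f a.2 <;> simp [hx, hy] <;> first | omega | tauto

theorem Comp.cutBy (hc : Comp W c) (hf : ∀ a ∈ c, f a.2 ⊆ a.2) : Comp W (cutBy f c) := by
  refine forall_mem_cutBy.2 fun a ha => ?_
  rcases hc a ha with h | h
  · exact Or.inl ((hf a ha).trans h)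
  · exact Or.inr (h.mono_left (hf a ha))

theorem Comp.append (hc : Comp W c) (hd : Comp W d) : Comp W (c ++ d) := by
  intro a ha
  rcases List.mem_append.1 ha with h | h
  · exact hc a h
  · exact hd a h

/-- Shrinking the sets of a compatible list to nonempty subsets does not change how many of them
lie in `W`. -/
theorem numIn_cutBy (hc : Comp W c) (hf : ∀ a ∈ c, f a.2 ⊆ a.2)
    (hne : ∀ a ∈ c, (f a.2).Nonempty) : numIn W (cutBy f c) = numIn W c := by
  unfold numIn DynSimplex.cutBy
  rw [List.countP_map]
  apply List.countP_congr
  intro a ha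
  simp only [Function.comp, decide_eq_true_eq]
  refine ⟨fun h => ?_, (hf a ha).trans⟩
  rcases hc a ha with h' | h'
  · exact h'
  · obtain ⟨y, hy⟩ := hne a ha
    exact absurd (h hy) (Set.disjoint_left.1 h' (hf a ha hy))

theorem bal_cutBy (hU : Comp U c) (hV : Comp V c) (hf : ∀ a ∈ c, f a.2 ⊆ a.2)
    (hne : ∀ a ∈ c, (f a.2).Nonempty) : bal U V (cutBy f c) = bal U V c := by
  simp only [bal, numIn_cutBy hU hf hne, numIn_cutBy hV hf hne]

theorem bal_eq_zero_of_empty (h : ∀ a ∈ c, a.2 = ∅) : bal U V c = 0 := by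
  have : ∀ W : Set X, numIn W c = c.length := by
    intro W
    rw [numIn, List.countP_eq_length]
    intro a ha
    simp [h a ha]
  simp [bal, this]

theorem mult_eq_zero_of_empty (h : ∀ a ∈ c, a.2 = ∅) (x : X) : mult x c = 0 := by
  rw [mult, List.countP_eq_zero]
  intro a ha
  simp [h a ha]

theorem bal_swap : bal V U c = -bal U V c := by
  simp [bal]

end Lists

/-! ### Cut-and-stacked columns -/

section Columns

variable {X : Type*} [TopologicalSpace X] [MeasurableSpace X]
  {K : Set (ProbabilityMeasure X)}

/-- The atoms of a KR-partition, named by their column and their level. -/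
abbrev Label (T : KRPartition X K) : Type :=
  (i : Fin T.numCols) × Fin (T.height i + 1)

/-- The names of the atoms of the `i`-th column of `T`, from base to top. -/
def colLabels (T : KRPartition X K) (i : Fin T.numCols) : List (Label T) :=
  (List.finRange (T.height i + 1)).map fun j => ⟨i, j⟩

/-- A column obtained by cutting and stacking columns of `T`: a list of clopen sets which are all
`K`-equivalent, each set being labelled by an atom of `T` which contains it, such that the labels
run successively through whole columns of `T`. -/
structure Valid (T : KRPartition X K) (c : List (Label T × Set X)) : Prop where
  word : ∃ w : List (Fin T.numCols), w ≠ [] ∧ c.map Prod.fst = w.flatMap (colLabels T)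
  sub : ∀ a ∈ c, a.2 ⊆ T.atom a.1.1 a.1.2
  clopen : ∀ a ∈ c, IsClopen a.2
  equivK : ∀ a ∈ c, ∀ b ∈ c, ∀ μ ∈ K, μ a.2 = μ b.2

variable {T : KRPartition X K} {c d : List (Label T × Set X)} {f : Set X → Set X}

theorem Valid.ne_nil (hc : Valid T c) : c ≠ [] := by
  obtain ⟨w, hw, h⟩ := hc.word
  rintro rfl
  cases w with
  | nil => exact hw rfl
  | cons i w => simp [colLabels, List.finRange_succ] at h

theorem Valid.cutBy (hc : Valid T c) (hcl : ∀ a ∈ c, IsClopen (f a.2))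
    (hf : ∀ a ∈ c, f a.2 ⊆ a.2)
    (he : ∀ a ∈ c, ∀ b ∈ c, ∀ μ ∈ K, μ (f a.2) = μ (f b.2)) : Valid T (cutBy f c) where
  word := by rw [map_fst_cutBy]; exact hc.word
  sub := forall_mem_cutBy.2 fun a ha => (hf a ha).trans (hc.sub a ha)
  clopen := forall_mem_cutBy.2 hcl
  equivK := forall_mem_cutBy.2 fun a ha => forall_mem_cutBy.2 fun b hb => he a ha b hb

theorem Valid.append (hc : Valid T c) (hd : Valid T d)
    (h : ∀ a ∈ c, ∀ b ∈ d, ∀ μ ∈ K, μ a.2 = μ b.2) : Valid T (c ++ d) where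
  word := by
    obtain ⟨w, hw, h⟩ := hc.word
    obtain ⟨w', hw', h'⟩ := hd.word
    exact ⟨w ++ w', by simp [hw], by simp [h, h']⟩
  sub := List.forall_mem_append.2 ⟨hc.sub, hd.sub⟩
  clopen := List.forall_mem_append.2 ⟨hc.clopen, hd.clopen⟩
  equivK := by
    intro a ha b hb μ hμ
    rcases List.mem_append.1 ha with ha | ha <;> rcases List.mem_append.1 hb with hb | hb
    · exact hc.equivK a ha b hb μ hμ
    · exact h a ha b hb μ hμ
    · exact (h b hb a ha μ hμ).symm
    · exact hd.equivK a ha b hb μ hμ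

theorem empty_of_measure_zero (hF : ∀ μ ∈ K, FullSupport μ) {μ : ProbabilityMeasure X}
    (hμ : μ ∈ K) {A : Set X} (hA : IsClopen A) (h : μ A = 0) : A = ∅ := by
  by_contra hne
  exact (hF μ hμ A hA.isOpen (Set.nonempty_iff_ne_empty.2 hne)).ne' h

/-- Goodness, extended to the case of equality: a set `z` which is smaller than, or equivalent to,
the atoms of a column can be copied into each of these atoms. -/
theorem exists_cut (hG : Good K) (hc : Valid T c) {z : Set X} (hz : IsClopen z)
    (h : ∀ a ∈ c, (∀ μ ∈ K, μ z = μ a.2) ∨ (∀ μ ∈ K, μ z < μ a.2)) :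
    ∃ f : Set X → Set X, ∀ a ∈ c, IsClopen (f a.2) ∧ f a.2 ⊆ a.2 ∧
      ∀ μ ∈ K, μ (f a.2) = μ z := by
  have : ∀ A : Set X, ∃ D : Set X, ∀ a ∈ c, a.2 = A →
      IsClopen D ∧ D ⊆ A ∧ ∀ μ ∈ K, μ D = μ z := by
    intro A
    by_cases hA : ∃ a ∈ c, a.2 = A
    · obtain ⟨a, ha, rfl⟩ := hA
      rcases h a ha with h1 | h1
      · exact ⟨a.2, fun _ _ _ => ⟨hc.clopen a ha, subset_rfl, fun μ hμ => (h1 μ hμ).symm⟩⟩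
      · obtain ⟨D, hD⟩ := hG z a.2 hz (hc.clopen a ha) h1
        exact ⟨D, fun _ _ _ => hD⟩
    · exact ⟨∅, fun a ha h => (hA ⟨a, ha, h⟩).elim⟩
  choose f hf using this
  exact ⟨f, fun a ha => hf a.2 a ha rfl⟩

/-- A cut-and-stacked column of `T` which is compatible with `U` and with `V`. -/
structure Ok (T : KRPartition X K) (U V : Set X) (c : List (Label T × Set X)) : Prop
    extends Valid T c where
  compU : Comp U c
  compV : Comp V c

variable {U V : Set X}

open Classical in
/-- The number of columns whose imbalance has absolute value `M`. -/
noncomputable def numExt (U V : Set X) (M : ℤ) (R : List (List (Label T × Set X))) : ℕ :=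
  R.countP fun c => decide (|bal U V c| = M)

theorem Ok.swap (hc : Ok T U V c) : Ok T V U c := ⟨hc.toValid, hc.compV, hc.compU⟩

theorem numExt_swap (M : ℤ) (R : List (List (Label T × Set X))) :
    numExt V U M R = numExt U V M R := by
  simp [numExt, bal_swap (U := U) (V := V)]

variable [OpensMeasurableSpace X]

theorem measure_sdiff_add (μ : ProbabilityMeasure X) {A B : Set X} (hB : IsClopen B)
    (h : B ⊆ A) : μ (A \ B) + μ B = μ A := by
  have := measure_sdiff_add_inter (μ := (μ : Measure X)) A hB.isOpen.measurableSet
  rw [Set.inter_eq_self_of_subset_right h] at this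
  apply ENNReal.coe_injective
  push_cast
  simpa [ProbabilityMeasure.ennreal_coeFn_eq_coeFn_toMeasure] using this

/-- By full support, comparison of a clopen set with a clopen subset is uniform over `K`. -/
theorem measure_eq_or_lt (hF : ∀ μ ∈ K, FullSupport μ) {A B : Set X} (hA : IsClopen A)
    (hB : IsClopen B) (h : B ⊆ A) :
    (∀ μ ∈ K, μ B = μ A) ∨ (∀ μ ∈ K, μ B < μ A) := by
  by_cases hne : (A \ B).Nonempty
  · right
    intro μ hμ
    rw [← measure_sdiff_add μ hB h]
    exact lt_add_of_pos_left _ (hF μ hμ _ (hA.diff hB).isOpen hne)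
  · left
    rw [Set.not_nonempty_iff_eq_empty, Set.sdiff_eq_empty] at hne
    intro μ _
    rw [h.antisymm hne]

/-- Cutting a column along copies of `z` yields two columns. -/
theorem Valid.cut_both (hc : Valid T c) {z : Set X}
    (hf : ∀ a ∈ c, IsClopen (f a.2) ∧ f a.2 ⊆ a.2 ∧ ∀ μ ∈ K, μ (f a.2) = μ z) :
    Valid T (DynSimplex.cutBy f c) ∧ Valid T (DynSimplex.cutBy (fun A => A \ f A) c) := by
  refine ⟨hc.cutBy (fun a ha => (hf a ha).1) (fun a ha => (hf a ha).2.1)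
    fun a ha b hb μ hμ => ?_,
    hc.cutBy (fun a ha => (hc.clopen a ha).diff (hf a ha).1) (fun a ha => Set.sdiff_subset)
    fun a ha b hb μ hμ => ?_⟩
  · rw [(hf a ha).2.2 μ hμ, (hf b hb).2.2 μ hμ]
  · have h1 := measure_sdiff_add μ (hf a ha).1 (hf a ha).2.1
    have h2 := measure_sdiff_add μ (hf b hb).1 (hf b hb).2.1
    rw [(hf a ha).2.2 μ hμ, hc.equivK a ha b hb μ hμ, ← h2, (hf b hb).2.2 μ hμ] at h1
    exact add_right_cancel h1

/-- The atoms of `p` have the total measure of the sets `z` of the pairs `(q, z)` in `J`, each `z` lying in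
an atom of its column `q` of negative imbalance. Cut `p` into pieces equivalent to these sets, cut
each `q` along `z`, and stack the two matching pieces. If `p` has imbalance `M` (or is empty), none of the
stacked columns has imbalance `± M`. -/
theorem stack (hne : K.Nonempty) (hF : ∀ μ ∈ K, FullSupport μ) (hG : Good K) {M : ℤ}
    (hM : 0 < M) (J : List (List (Label T × Set X) × Set X)) :
    ∀ p : List (Label T × Set X), Ok T U V p →
    (∀ a ∈ p, a.2.Nonempty → bal U V p = M) →
    (∀ a ∈ p, ∀ μ ∈ K, μ a.2 = (J.map fun q => μ q.2).sum) →
    (∀ q ∈ J, Ok T U V q.1 ∧ IsClopen q.2 ∧ (∃ a ∈ q.1, q.2 ⊆ a.2) ∧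
      -M ≤ bal U V q.1 ∧ bal U V q.1 < 0) →
    ∃ R : List (List (Label T × Set X)),
      (∀ d ∈ R, Ok T U V d ∧ |bal U V d| ≤ M) ∧
      (∀ x, mult x R.flatten = mult x p + mult x (J.map Prod.fst).flatten) ∧
      numExt U V M R ≤ numExt U V M (J.map Prod.fst) := by
  obtain ⟨μ₀, hμ₀⟩ := hne
  induction J with
  | nil =>
    intro p hp _ hsum _
    refine ⟨[], by simp, fun x => ?_, le_rfl⟩
    rw [mult_eq_zero_of_empty (c := p)]
    · simp [mult]
    · intro a ha
      exact empty_of_measure_zero hF hμ₀ (hp.clopen a ha) (by simpa using hsum a ha μ₀ hμ₀)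
  | cons q J ih =>
    intro p hp hbal hsum hJ
    obtain ⟨q, z⟩ := q
    obtain ⟨hq, hz, ⟨a₀, ha₀, hza₀⟩, hq1, hq2⟩ := hJ (q, z) (by simp)
    have hJ' := fun r hr => hJ r (List.mem_cons_of_mem _ hr)
    simp only at hq hz ha₀ hza₀ hq1 hq2
    simp only [List.map_cons, List.sum_cons] at hsum
    -- copies of `z` in the atoms of `q`
    obtain ⟨g, hg⟩ := exists_cut hG hq.toValid hz (by
      intro a ha
      rcases measure_eq_or_lt hF (hq.clopen a₀ ha₀) hz hza₀ with h | h
      · exact Or.inl fun μ hμ => (h μ hμ).trans (hq.equivK a₀ ha₀ a ha μ hμ)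
      · exact Or.inr fun μ hμ => (h μ hμ).trans_eq (hq.equivK a₀ ha₀ a ha μ hμ))
    -- copies of `z` in the atoms of `p`
    obtain ⟨f, hf⟩ := exists_cut hG hp.toValid hz (by
      intro a ha
      by_cases hall : ∀ r ∈ J, r.2 = ∅
      · left
        intro μ hμ
        have : (J.map fun r => μ r.2).sum = 0 := by
          rw [List.sum_eq_zero_iff]
          simp only [List.mem_map]
          rintro _ ⟨r, hr, rfl⟩
          simp [hall r hr]
        rw [hsum a ha μ hμ, this, add_zero]
      · right
        intro μ hμ
        push Not at hall
        obtain ⟨r, hr, hrne⟩ := hall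
        rw [hsum a ha μ hμ]
        refine lt_add_of_pos_right _ (pos_iff_ne_zero.2 fun h0 => ?_)
        rw [List.sum_eq_zero_iff] at h0
        exact (hF μ hμ r.2 (hJ' r hr).2.1.isOpen hrne).ne'
          (h0 _ (List.mem_map.2 ⟨r, hr, rfl⟩)))
    have hfs := fun a ha => (hf a ha).2.1
    have hgs := fun a ha => (hg a ha).2.1
    obtain ⟨vp1, vp2⟩ := hp.toValid.cut_both hf
    obtain ⟨vq1, vq2⟩ := hq.toValid.cut_both hg
    have hd : ∀ (h : Set X → Set X) (c : List (Label T × Set X)), ∀ a ∈ c, a.2 \ h a.2 ⊆ a.2 :=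
      fun _ _ _ _ => Set.sdiff_subset
    have op1 : Ok T U V (cutBy f p) := ⟨vp1, hp.compU.cutBy hfs, hp.compV.cutBy hfs⟩
    have oq1 : Ok T U V (cutBy g q) := ⟨vq1, hq.compU.cutBy hgs, hq.compV.cutBy hgs⟩
    have op2 : Ok T U V (cutBy (fun A => A \ f A) p) :=
      ⟨vp2, hp.compU.cutBy (hd f p), hp.compV.cutBy (hd f p)⟩
    have oq2 : Ok T U V (cutBy (fun A => A \ g A) q) :=
      ⟨vq2, hq.compU.cutBy (hd g q), hq.compV.cutBy (hd g q)⟩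
    -- a remainder column is either empty, or has the imbalance of the column it comes from
    have key : ∀ (h : Set X → Set X) (c : List (Label T × Set X)), Ok T U V c →
        Ok T U V (cutBy (fun A => A \ h A) c) →
        (∀ a ∈ cutBy (fun A => A \ h A) c, a.2 = ∅) ∨
        bal U V (cutBy (fun A => A \ h A) c) = bal U V c := by
      intro h c hc hc'
      by_cases he : ∀ a ∈ cutBy (fun A => A \ h A) c, a.2 = ∅
      · exact Or.inl he
      · right
        push Not at he
        obtain ⟨b, hb, hbne⟩ := he
        refine bal_cutBy hc.compU hc.compV (hd h c) ?_
        refine (forall_mem_cutBy (f := fun A => A \ h A) (P := fun a => a.2.Nonempty)).1 ?_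
        intro a ha
        by_contra hane
        rw [Set.not_nonempty_iff_eq_empty] at hane
        have := hc'.equivK b hb a ha μ₀ hμ₀
        rw [hane] at this
        exact hbne.ne_empty (empty_of_measure_zero hF hμ₀ (hc'.clopen b hb) (by simpa using this))
    obtain ⟨R, hR1, hR2, hR3⟩ := ih (cutBy (fun A => A \ f A) p) op2
      (by
        intro a ha hane
        rcases key f p hp op2 with h | h
        · exact absurd (h a ha) hane.ne_empty
        · rw [h]
          obtain ⟨b, hb, rfl⟩ := mem_cutBy.1 ha
          exact hbal b hb (hane.mono Set.sdiff_subset))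
      (by
        refine forall_mem_cutBy.2 fun a ha μ hμ => ?_
        have h1 := measure_sdiff_add μ (hf a ha).1 (hf a ha).2.1
        rw [(hf a ha).2.2 μ hμ, hsum a ha μ hμ, add_comm] at h1
        exact add_left_cancel h1)
      hJ'
    have oA : Ok T U V (cutBy f p ++ cutBy g q) := by
      refine ⟨vp1.append vq1 ?_, op1.compU.append oq1.compU, op1.compV.append oq1.compV⟩
      refine forall_mem_cutBy.2 fun a ha => forall_mem_cutBy.2 fun b hb μ hμ => ?_
      rw [(hf a ha).2.2 μ hμ, (hg b hb).2.2 μ hμ]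
    have bA : |bal U V (cutBy f p ++ cutBy g q)| < M := by
      rcases z.eq_empty_or_nonempty with hz0 | hz0
      · rw [bal_eq_zero_of_empty]
        · simpa using hM
        · refine List.forall_mem_append.2 ⟨forall_mem_cutBy.2 fun a ha => ?_,
            forall_mem_cutBy.2 fun a ha => ?_⟩
          · exact empty_of_measure_zero hF hμ₀ (hf a ha).1
              (by rw [(hf a ha).2.2 μ₀ hμ₀, hz0]; simp)
          · exact empty_of_measure_zero hF hμ₀ (hg a ha).1
              (by rw [(hg a ha).2.2 μ₀ hμ₀, hz0]; simp)
      · have pos : ∀ A : Set X, (∀ μ ∈ K, μ A = μ z) → A.Nonempty := by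
          intro A hA
          by_contra hane
          rw [Set.not_nonempty_iff_eq_empty] at hane
          have := hA μ₀ hμ₀
          rw [hane] at this
          exact (hF μ₀ hμ₀ z hz.isOpen hz0).ne' (by simpa using this.symm)
        have fne := fun a ha => pos _ (hf a ha).2.2
        have gne := fun a ha => pos _ (hg a ha).2.2
        rw [bal_append, bal_cutBy hp.compU hp.compV hfs fne,
          bal_cutBy hq.compU hq.compV hgs gne]
        obtain ⟨a, ha⟩ := List.exists_mem_of_ne_nil _ hp.ne_nil
        rw [hbal a ha ((fne a ha).mono (hfs a ha)), abs_lt]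
        constructor <;> omega
    have bB : bal U V (cutBy (fun A => A \ g A) q) = 0 ∨
        bal U V (cutBy (fun A => A \ g A) q) = bal U V q :=
      (key g q hq oq2).imp_left bal_eq_zero_of_empty
    refine ⟨(cutBy f p ++ cutBy g q) :: cutBy (fun A => A \ g A) q :: R, ?_, ?_, ?_⟩
    · simp only [List.mem_cons]
      rintro d (rfl | rfl | hd)
      · exact ⟨oA, bA.le⟩
      · refine ⟨oq2, ?_⟩
        rcases bB with h | h <;> rw [h, abs_le] <;> constructor <;> omega
      · exact hR1 d hd
    · intro x
      simp only [List.flatten_cons, mult_append, hR2, List.map_cons, ← mult_cutBy hfs x,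
        ← mult_cutBy hgs x]
      ring
    · simp only [numExt, List.countP_cons, List.map_cons] at hR3 ⊢
      rw [if_neg (c := decide (|bal U V (cutBy f p ++ cutBy g q)| = M) = true)
        (by simpa using bA.ne)]
      rcases bB with h | h
      · rw [h, if_neg (by simpa using hM.ne)]
        omega
      · rw [h]
        omega

/-! ### Compatibility with a clopen set -/

open Classical in
/-- A column can be cut into columns compatible with `W`. The induction is on the number of atoms
which are not compatible with `W`: cutting one of them along `W`, and the other atoms accordingly,
gives two columns with fewer such atoms. -/
theorem exists_comp (hF : ∀ μ ∈ K, FullSupport μ) (hG : Good K) {W : Set X} (hW : IsClopen W)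
    (n : ℕ) : ∀ c : List (Label T × Set X), Valid T c →
    (c.countP fun a => decide ¬(a.2 ⊆ W ∨ Disjoint a.2 W)) ≤ n →
    ∃ R : List (List (Label T × Set X)),
      (∀ d ∈ R, Valid T d ∧ Comp W d ∧ ∀ a ∈ d, ∃ b ∈ c, a.2 ⊆ b.2) ∧
      ∀ x, mult x R.flatten = mult x c := by
  induction n with
  | zero =>
    intro c hc h
    refine ⟨[c], ?_, by simp⟩
    simp only [List.mem_singleton]
    rintro d rfl
    refine ⟨hc, fun a ha => ?_, fun a ha => ⟨a, ha, subset_rfl⟩⟩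
    rw [Nat.le_zero, List.countP_eq_zero] at h
    simpa [or_iff_not_imp_left] using h a ha
  | succ n ih =>
    intro c hc hcount
    by_cases hcomp : Comp W c
    · refine ⟨[c], ?_, by simp⟩
      simp only [List.mem_singleton]
      rintro d rfl
      exact ⟨hc, hcomp, fun a ha => ⟨a, ha, subset_rfl⟩⟩
    unfold Comp at hcomp
    push Not at hcomp
    obtain ⟨a₀, ha₀, h1, h2⟩ := hcomp
    have hz : IsClopen (a₀.2 ∩ W) := (hc.clopen a₀ ha₀).inter hW
    obtain ⟨g, hg⟩ := exists_cut hG hc hz (by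
      intro a ha
      rcases measure_eq_or_lt hF (hc.clopen a₀ ha₀) hz Set.inter_subset_left with h | h
      · exact Or.inl fun μ hμ => (h μ hμ).trans (hc.equivK a₀ ha₀ a ha μ hμ)
      · exact Or.inr fun μ hμ => (h μ hμ).trans_eq (hc.equivK a₀ ha₀ a ha μ hμ))
    -- the atom `a₀` has to be cut exactly along `W`
    obtain ⟨f, hf, hfa⟩ : ∃ f : Set X → Set X, (∀ a ∈ c, IsClopen (f a.2) ∧ f a.2 ⊆ a.2 ∧
        ∀ μ ∈ K, μ (f a.2) = μ (a₀.2 ∩ W)) ∧ f a₀.2 = a₀.2 ∩ W := by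
      refine ⟨fun A => if A = a₀.2 then a₀.2 ∩ W else g A, fun a ha => ?_, by simp⟩
      by_cases hA : a.2 = a₀.2
      · simp only [hA, if_true]
        exact ⟨hz, Set.inter_subset_left, by simp⟩
      · simp only [hA, if_false]
        exact hg a ha
    have hfs := fun a ha => (hf a ha).2.1
    obtain ⟨v1, v2⟩ := hc.cut_both hf
    have hlt : ∀ h : Set X → Set X, (∀ a ∈ c, h a.2 ⊆ a.2) →
        (h a₀.2 ⊆ W ∨ Disjoint (h a₀.2) W) →
        ((cutBy h c).countP fun a => decide ¬(a.2 ⊆ W ∨ Disjoint a.2 W)) ≤ n := by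
      intro h hsub h0
      rw [cutBy, List.countP_map]
      refine Nat.lt_succ_iff.1 (lt_of_lt_of_le ?_ hcount)
      obtain ⟨s, t, rfl⟩ := List.append_of_mem ha₀
      have mono : ∀ l : List (Label T × Set X), (∀ a ∈ l, h a.2 ⊆ a.2) →
          l.countP ((fun a => decide ¬(a.2 ⊆ W ∨ Disjoint a.2 W)) ∘ fun a => (a.1, h a.2)) ≤
          l.countP (fun a => decide ¬(a.2 ⊆ W ∨ Disjoint a.2 W)) := by
        intro l hl
        apply List.countP_mono_left
        intro a ha
        simp only [Function.comp, decide_eq_true_eq]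
        exact mt (Or.imp (hl a ha).trans fun h' => h'.mono_left (hl a ha))
      have m1 := mono s fun a ha => hsub a (by simp [ha])
      have m2 := mono t fun a ha => hsub a (by simp [ha])
      rw [List.countP_append, List.countP_append, List.countP_cons, List.countP_cons,
        if_neg (by simpa [or_iff_not_imp_left] using h0), if_pos (by simpa using ⟨h1, h2⟩)]
      omega
    obtain ⟨R1, hR1, hm1⟩ := ih _ v1 (hlt f hfs (Or.inl (by rw [hfa]; exact Set.inter_subset_right)))
    obtain ⟨R2, hR2, hm2⟩ := ih _ v2 (hlt (fun A => A \ f A) (fun _ _ => Set.sdiff_subset)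
      (Or.inr (by
        simp only [hfa]
        rw [Set.disjoint_left]
        rintro x ⟨hx, hx'⟩ hxW
        exact hx' ⟨hx, hxW⟩)))
    refine ⟨R1 ++ R2, ?_, fun x => ?_⟩
    · intro d hd
      have aux : ∀ h : Set X → Set X, (∀ a ∈ c, h a.2 ⊆ a.2) →
          (∀ a ∈ d, ∃ b ∈ cutBy h c, a.2 ⊆ b.2) → ∀ a ∈ d, ∃ b ∈ c, a.2 ⊆ b.2 := by
        intro h hsub hh a ha
        obtain ⟨b, hb, hab⟩ := hh a ha
        obtain ⟨b', hb', rfl⟩ := mem_cutBy.1 hb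
        exact ⟨b', hb', hab.trans (hsub b' hb')⟩
      rcases List.mem_append.1 hd with hd | hd
      · exact ⟨(hR1 d hd).1, (hR1 d hd).2.1, aux f hfs (hR1 d hd).2.2⟩
      · exact ⟨(hR2 d hd).1, (hR2 d hd).2.1,
          aux (fun A => A \ f A) (fun _ _ => Set.sdiff_subset) (hR2 d hd).2.2⟩
    · rw [List.flatten_append, mult_append, hm1, hm2, mult_cutBy hfs]

theorem exists_comp_list (hF : ∀ μ ∈ K, FullSupport μ) (hG : Good K) {W : Set X}
    (hW : IsClopen W) (L : List (List (Label T × Set X))) (hL : ∀ c ∈ L, Valid T c) :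
    ∃ R : List (List (Label T × Set X)),
      (∀ d ∈ R, Valid T d ∧ Comp W d ∧ ∃ c ∈ L, ∀ a ∈ d, ∃ b ∈ c, a.2 ⊆ b.2) ∧
      ∀ x, mult x R.flatten = mult x L.flatten := by
  induction L with
  | nil => exact ⟨[], by simp, by simp⟩
  | cons c L ih =>
    obtain ⟨R, hR, hm⟩ := ih fun d hd => hL d (List.mem_cons_of_mem _ hd)
    obtain ⟨R', hR', hm'⟩ := exists_comp hF hG hW _ c (hL c (by simp)) le_rfl
    refine ⟨R' ++ R, fun d hd => ?_, fun x => ?_⟩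
    · rcases List.mem_append.1 hd with hd | hd
      · exact ⟨(hR' d hd).1, (hR' d hd).2.1, c, by simp, (hR' d hd).2.2⟩
      · obtain ⟨h1, h2, c', hc', h3⟩ := hR d hd
        exact ⟨h1, h2, c', List.mem_cons_of_mem _ hc', h3⟩
    · simp [mult_append, hm, hm']

/-- The columns of `T` can be cut so as to be compatible with `U` and `V`. -/
theorem exists_ok (hF : ∀ μ ∈ K, FullSupport μ) (hG : Good K) (T : KRPartition X K)
    (hU : IsClopen U) (hV : IsClopen V) :
    ∃ R : List (List (Label T × Set X)),
      (∀ d ∈ R, Ok T U V d) ∧ ∀ x, mult x R.flatten = 1 := by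
  classical
  obtain ⟨R1, hR1, hm1⟩ := exists_comp_list hF hG hU
    ((List.finRange T.numCols).map fun i => (colLabels T i).map fun l => (l, T.atom l.1 l.2)) (by
      simp only [List.mem_map]
      rintro _ ⟨i, -, rfl⟩
      refine ⟨⟨[i], by simp, by simp [Function.comp_def]⟩, ?_, ?_, ?_⟩
      · simp only [List.mem_map]
        rintro _ ⟨l, -, rfl⟩
        exact subset_rfl
      · simp only [List.mem_map]
        rintro _ ⟨l, -, rfl⟩
        exact T.clopen _ _
      · simp only [List.mem_map, colLabels]
        rintro _ ⟨_, ⟨j, -, rfl⟩, rfl⟩ _ ⟨_, ⟨j', -, rfl⟩, rfl⟩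
        exact T.equivK i j j')
  obtain ⟨R2, hR2, hm2⟩ := exists_comp_list hF hG hV R1 fun d hd => (hR1 d hd).1
  refine ⟨R2, fun d hd => ?_, fun x => ?_⟩
  · obtain ⟨h1, h2, c, hc, h3⟩ := hR2 d hd
    refine ⟨h1, fun a ha => ?_, h2⟩
    obtain ⟨b, hb, hab⟩ := h3 a ha
    exact ((hR1 c hc).2.1 b hb).imp hab.trans fun h => h.mono_left hab
  · rw [hm2, hm1]
    obtain ⟨⟨i, j⟩, hij, huniq⟩ := T.partition x
    simp only [mult, List.countP_flatten, List.map_map, Function.comp_def, colLabels,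
      List.countP_map]
    have h0 : ∀ i' : Fin T.numCols, (List.finRange (T.height i' + 1)).countP
        (fun j' => decide (x ∈ T.atom i' j')) = if i' = i then 1 else 0 := by
      intro i'
      split_ifs with hi
      · subst hi
        rw [List.countP_congr (q := fun j' => j' == j)]
        · exact List.count_eq_one_of_mem (List.nodup_finRange _) (List.mem_finRange j)
        · intro j' _
          simp only [decide_eq_true_eq, beq_iff_eq]
          refine ⟨fun h => ?_, fun h => h ▸ hij⟩
          have := huniq ⟨i', j'⟩ h
          simpa using this
      · rw [List.countP_eq_zero]
        intro j' _ h
        have := huniq ⟨i', j'⟩ (by simpa using h)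
        simp only [Sigma.mk.injEq] at this
        exact hi this.1
    simp only [h0]
    rw [← List.ofFn_eq_map, List.sum_ofFn]
    simp

/-! ### Decreasing the imbalance -/

open Classical in
/-- Additivity of `μ` on a clopen partition `l` of `S`, the partition being expressed through the
multiplicities of points. -/
theorem measure_eq_sum {L : Type*} (μ : ProbabilityMeasure X) (l : List (L × Set X)) :
    ∀ S : Set X, (∀ a ∈ l, IsClopen a.2) → (∀ x, mult x l = if x ∈ S then 1 else 0) →
    μ S = (l.map fun a => μ a.2).sum := by
  induction l with
  | nil =>
    intro S _ h
    have : S = ∅ := by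
      ext x
      have := h x
      by_cases hx : x ∈ S <;> simp_all [mult]
    simp [this]
  | cons a l ih =>
    intro S hl h
    simp only [mult, List.countP_cons, decide_eq_true_eq] at h ih
    have hsub : a.2 ⊆ S := by
      intro x hx
      by_contra hxS
      have := h x
      simp [hx, hxS] at this
    rw [List.map_cons, List.sum_cons, ← ih (S \ a.2) (fun b hb => hl b (List.mem_cons_of_mem _ hb)),
      add_comm, measure_sdiff_add μ (hl a (by simp)) hsub]
    intro x
    have h1 := h x
    by_cases hx : x ∈ a.2
    · have := hsub hx
      simp only [hx, this, if_true, Set.mem_sdiff] at h1 ⊢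
      simpa using h1
    · simpa [hx] using h1

/-- The base of a column, i.e. its first atom (empty for an empty list). -/
def baseOf {L X : Type*} : List (L × Set X) → Set X
  | [] => ∅
  | a :: _ => a.2

theorem exists_baseOf {L X : Type*} {c : List (L × Set X)} (hc : c ≠ []) :
    ∃ a ∈ c, baseOf c = a.2 := by
  cases c with
  | nil => exact absurd rfl hc
  | cons a c => exact ⟨a, by simp, rfl⟩

open Classical in
/-- The measure of `U`, computed column by column. -/
theorem measure_eq_sum_numIn {μ : ProbabilityMeasure X} (hμ : μ ∈ K)
    {R : List (List (Label T × Set X))} (hR : ∀ c ∈ R, Valid T c) (hU : ∀ c ∈ R, Comp U c)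
    (hm : ∀ x, mult x R.flatten = 1) :
    (μ U : ℝ) = (R.map fun c => (numIn U c : ℝ) * μ (baseOf c)).sum := by
  have h1 : μ U = ((R.flatten.filter fun a => decide (a.2 ⊆ U)).map fun a => μ a.2).sum := by
    apply measure_eq_sum
    · intro a ha
      obtain ⟨c, hc, hac⟩ := List.mem_flatten.1 (List.mem_of_mem_filter ha)
      exact (hR c hc).clopen a hac
    · intro x
      rw [mult, List.countP_filter]
      split_ifs with hx
      · rw [← hm x, mult]
        apply List.countP_congr
        intro a ha
        simp only [Bool.and_eq_true, decide_eq_true_eq, and_iff_left_iff_imp]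
        intro hxa
        obtain ⟨c, hc, hac⟩ := List.mem_flatten.1 ha
        exact (hU c hc a hac).resolve_right fun h => Set.disjoint_left.1 h hxa hx
      · rw [List.countP_eq_zero]
        intro a _
        simp only [Bool.and_eq_true, decide_eq_true_eq, not_and]
        exact fun hxa h => hx (h hxa)
  have h2 : ∀ R : List (List (Label T × Set X)), (∀ c ∈ R, Valid T c) →
      ((R.flatten.filter fun a => decide (a.2 ⊆ U)).map fun a => μ a.2).sum =
      (R.map fun c => (numIn U c : NNReal) * μ (baseOf c)).sum := by
    intro R hR
    induction R with
    | nil => simp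
    | cons c R ih =>
      rw [List.flatten_cons, List.filter_append, List.map_append, List.sum_append, List.map_cons,
        List.sum_cons, ih fun d hd => hR d (List.mem_cons_of_mem _ hd)]
      congr 1
      have hc := hR c (by simp)
      obtain ⟨b, hb, hbase⟩ := exists_baseOf hc.ne_nil
      rw [List.sum_eq_card_nsmul _ (μ (baseOf c)), List.length_map, numIn,
        List.countP_eq_length_filter, nsmul_eq_mul]
      simp only [List.mem_map]
      rintro _ ⟨a, ha, rfl⟩
      rw [hbase]
      exact hc.equivK a (List.mem_of_mem_filter ha) b hb μ hμ
  rw [h1, h2 R hR]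
  push_cast [List.map_map]
  rfl

theorem sum_bal_eq_zero {μ : ProbabilityMeasure X} (hμ : μ ∈ K)
    {R : List (List (Label T × Set X))} (hR : ∀ c ∈ R, Ok T U V c)
    (hm : ∀ x, mult x R.flatten = 1) (hUV : μ U = μ V) :
    (R.map fun c => (bal U V c : ℝ) * μ (baseOf c)).sum = 0 := by
  have h1 := measure_eq_sum_numIn hμ (fun c hc => (hR c hc).toValid)
    (fun c hc => (hR c hc).compU) hm
  have h2 := measure_eq_sum_numIn hμ (fun c hc => (hR c hc).toValid)
    (fun c hc => (hR c hc).compV) hm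
  have : (fun c : List (Label T × Set X) => (numIn U c : ℝ) * μ (baseOf c)) =
      fun c => (bal U V c : ℝ) * μ (baseOf c) + (numIn V c : ℝ) * μ (baseOf c) := by
    funext c
    simp only [bal]
    push_cast
    ring
  rw [this, List.sum_map_add, ← h2, hUV] at h1
  linarith

theorem mult_base_le {L X : Type*} (x : X) (J : List (List (L × Set X))) :
    mult x (J.map fun q => ((), baseOf q)) ≤ mult x J.flatten := by
  induction J with
  | nil => simp [mult]
  | cons q J ih =>
    rw [List.flatten_cons, mult_append, List.map_cons, mult, List.countP_cons, add_comm]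
    refine add_le_add ?_ ih
    cases q with
    | nil => simp [baseOf]
    | cons a q =>
      rw [mult, List.countP_cons]
      exact Nat.le_add_left _ _

theorem list_sum_eq_zero {α : Type*} {l : List α} {g : α → ℝ} (h0 : ∀ a ∈ l, 0 ≤ g a)
    (h : (l.map g).sum ≤ 0) : ∀ a ∈ l, g a = 0 := by
  induction l with
  | nil => simp
  | cons b l ih =>
    have h1 := h0 b (by simp)
    have h2 : 0 ≤ (l.map g).sum := by
      apply List.sum_nonneg
      simp only [List.mem_map]
      rintro _ ⟨a, ha, rfl⟩
      exact h0 a (List.mem_cons_of_mem _ ha)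
    rw [List.map_cons, List.sum_cons] at h
    intro a ha
    rcases List.mem_cons.1 ha with rfl | ha
    · linarith
    · exact ih (fun a ha => h0 a (List.mem_cons_of_mem _ ha)) (by linarith) a ha

theorem sum_map_const_mul {α : Type*} (l : List α) (M : ℝ) (g : α → ℝ) :
    (l.map fun a => M * g a).sum = M * (l.map g).sum := by
  induction l with
  | nil => simp
  | cons a l ih => simp [ih, mul_add]

open Classical in
/-- If some column has the maximal imbalance `M > 0`, cutting and stacking lowers the number of
columns of imbalance `± M`. -/
theorem step (hne : K.Nonempty) (hF : ∀ μ ∈ K, FullSupport μ) (hG : Good K)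
    (hUV : ∀ μ ∈ K, μ U = μ V) {M : ℤ} (hM : 0 < M) (R : List (List (Label T × Set X)))
    (hR : ∀ c ∈ R, Ok T U V c ∧ |bal U V c| ≤ M) (hm : ∀ x, mult x R.flatten = 1)
    {p : List (Label T × Set X)} (hp : p ∈ R) (hpM : bal U V p = M) :
    ∃ R' : List (List (Label T × Set X)), (∀ c ∈ R', Ok T U V c ∧ |bal U V c| ≤ M) ∧
      (∀ x, mult x R'.flatten = 1) ∧ numExt U V M R' < numExt U V M R := by
  -- `R` consists of `p`, of the list `J` of columns with negative imbalance, and of `P`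
  obtain ⟨J, P, hperm, hJ, hP⟩ : ∃ J P : List (List (Label T × Set X)),
      R.Perm (p :: (J ++ P)) ∧ (∀ q ∈ J, bal U V q < 0) ∧ (∀ q ∈ P, 0 ≤ bal U V q) := by
    refine ⟨(R.erase p).filter fun q => decide (bal U V q < 0),
      (R.erase p).filter fun q => !decide (bal U V q < 0), ?_, ?_, ?_⟩
    · exact (List.perm_cons_erase hp).trans ((List.filter_append_perm _ _).symm.cons p)
    · intro q hq
      simpa using (List.mem_filter.1 hq).2
    · intro q hq
      simpa using (List.mem_filter.1 hq).2
  have hmem : ∀ c, c ∈ R ↔ c = p ∨ c ∈ J ∨ c ∈ P := by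
    intro c
    rw [hperm.mem_iff]
    simp
  have hokR := fun c hc => (hR c hc).1
  have hokJ : ∀ q ∈ J, Ok T U V q := fun q hq => hokR q ((hmem q).2 (Or.inr (Or.inl hq)))
  have hokp : Ok T U V p := hokR p hp
  have hmult : ∀ x, mult x p + (mult x J.flatten + mult x P.flatten) = 1 := by
    intro x
    rw [← hm x, ← mult_append, ← mult_append, ← List.flatten_append, ← List.flatten_cons]
    exact (hperm.flatten.countP_eq _).symm
  have hclopen : ∀ c, Ok T U V c → IsClopen (baseOf c) := by
    intro c hc
    obtain ⟨a, ha, h⟩ := exists_baseOf hc.ne_nil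
    exact h ▸ hc.clopen a ha
  have hrel : ∀ μ ∈ K, (M : ℝ) * μ (baseOf p) +
      ((J.map fun c => (bal U V c : ℝ) * μ (baseOf c)).sum +
        (P.map fun c => (bal U V c : ℝ) * μ (baseOf c)).sum) = 0 := by
    intro μ hμ
    rw [← sum_bal_eq_zero hμ hokR hm (hUV μ hμ), (hperm.map _).sum_eq]
    simp [hpM]
  set Y : Set X := ⋃ q ∈ {q | q ∈ J}, baseOf q with hYdef
  have hY : IsClopen Y :=
    (List.finite_toSet J).isClopen_biUnion fun q hq => hclopen q (hokJ q hq)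
  -- measures of subsets of the union of the bases of the columns in `J`
  have hsumC : ∀ C : Set X, IsClopen C → C ⊆ Y → ∀ μ : ProbabilityMeasure X,
      μ C = (J.map fun q => μ (C ∩ baseOf q)).sum := by
    intro C hC hCY μ
    rw [measure_eq_sum μ (J.map fun q => ((), C ∩ baseOf q)) C, List.map_map]
    · rfl
    · simp only [List.mem_map]
      rintro _ ⟨q, hq, rfl⟩
      exact hC.inter (hclopen q (hokJ q hq))
    · intro x
      split_ifs with hx
      · have h1 : mult x (J.map fun q => ((), C ∩ baseOf q)) =
            mult x (J.map fun q => ((), baseOf q)) := by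
          simp [mult, List.countP_map, Function.comp_def, hx]
        have h2 := mult_base_le x J
        have h3 := hmult x
        have h4 : 0 < mult x (J.map fun q => ((), baseOf q)) := by
          rw [mult, List.countP_pos_iff]
          have := hCY hx
          simp only [hYdef, Set.mem_iUnion, Set.mem_ofPred_eq] at this
          obtain ⟨q, hq, hxq⟩ := this
          exact ⟨((), baseOf q), List.mem_map.2 ⟨q, hq, rfl⟩, by simpa using hxq⟩
        omega
      · simp [mult, List.countP_map, Function.comp_def, hx]
  have hsumY : ∀ μ : ProbabilityMeasure X,
      (μ Y : ℝ) = (J.map fun q => (μ (baseOf q) : ℝ)).sum := by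
    intro μ
    have h1 : ∀ q ∈ J, μ (Y ∩ baseOf q) = μ (baseOf q) := by
      intro q hq
      rw [Set.inter_eq_self_of_subset_right]
      exact Set.subset_biUnion_of_mem (u := baseOf) (show q ∈ {q | q ∈ J} from hq)
    rw [hsumC Y hY subset_rfl μ, List.map_congr_left h1]
    push_cast [List.map_map]
    rfl
  -- the defects `M + bal q` and `bal c` are nonnegative, whence `M μ(p) ≤ M μ(Y)`
  have hrel' : ∀ μ ∈ K, (M : ℝ) * μ Y - (M : ℝ) * μ (baseOf p) =
      (J.map fun q => ((M : ℝ) + bal U V q) * μ (baseOf q)).sum +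
        (P.map fun c => (bal U V c : ℝ) * μ (baseOf c)).sum := by
    intro μ hμ
    have h1 := hrel μ hμ
    have h2 : (fun q : List (Label T × Set X) => ((M : ℝ) + bal U V q) * μ (baseOf q)) =
        fun q => (M : ℝ) * μ (baseOf q) + (bal U V q : ℝ) * μ (baseOf q) := by
      funext q
      ring
    rw [h2, List.sum_map_add, sum_map_const_mul, ← hsumY μ]
    linarith
  have hposJ : ∀ μ : ProbabilityMeasure X, ∀ q ∈ J,
      0 ≤ ((M : ℝ) + bal U V q) * μ (baseOf q) := by
    intro μ q hq
    refine mul_nonneg ?_ (NNReal.coe_nonneg _)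
    have := (abs_le.1 (hR q ((hmem q).2 (Or.inr (Or.inl hq)))).2).1
    exact_mod_cast (by omega : 0 ≤ M + bal U V q)
  have hposP : ∀ μ : ProbabilityMeasure X, ∀ q ∈ P, 0 ≤ (bal U V q : ℝ) * μ (baseOf q) := by
    intro μ q hq
    refine mul_nonneg ?_ (NNReal.coe_nonneg _)
    exact_mod_cast hP q hq
  have hMR : (0 : ℝ) < M := by exact_mod_cast hM
  obtain ⟨C, hC, hCY, hCp⟩ : ∃ C : Set X, IsClopen C ∧ C ⊆ Y ∧ ∀ μ ∈ K, μ C = μ (baseOf p) := by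
    by_cases hlt : ∀ μ ∈ K, μ (baseOf p) < μ Y
    · exact hG _ _ (hclopen p hokp) hY hlt
    · push Not at hlt
      obtain ⟨μ₀, hμ₀, hle⟩ := hlt
      refine ⟨Y, hY, subset_rfl, fun μ hμ => ?_⟩
      -- all defects vanish for `μ₀`, hence, by full support, for every measure in `K`
      have hJ0 : 0 ≤ (J.map fun q => ((M : ℝ) + bal U V q) * μ₀ (baseOf q)).sum :=
        List.sum_nonneg (by
          simp only [List.mem_map]
          rintro _ ⟨q, hq, rfl⟩
          exact hposJ μ₀ q hq)
      have hP0 : 0 ≤ (P.map fun q => (bal U V q : ℝ) * μ₀ (baseOf q)).sum :=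
        List.sum_nonneg (by
          simp only [List.mem_map]
          rintro _ ⟨q, hq, rfl⟩
          exact hposP μ₀ q hq)
      have hle' : (M : ℝ) * μ₀ Y ≤ (M : ℝ) * μ₀ (baseOf p) :=
        mul_le_mul_of_nonneg_left (by exact_mod_cast hle) hMR.le
      have h0 := hrel' μ₀ hμ₀
      have hJz := list_sum_eq_zero (hposJ μ₀) (by linarith)
      have hPz := list_sum_eq_zero (hposP μ₀) (by linarith)
      have trans : ∀ (t : ℝ) (c : List (Label T × Set X)), Ok T U V c →
          t * μ₀ (baseOf c) = 0 → t * μ (baseOf c) = 0 := by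
        intro t c hc h
        rcases mul_eq_zero.1 h with h | h
        · simp [h]
        · rw [empty_of_measure_zero hF hμ₀ (hclopen c hc) (by exact_mod_cast h)]
          simp
      have h1 := hrel' μ hμ
      rw [List.map_congr_left (g := fun _ => (0 : ℝ)) fun q hq => trans _ q (hokJ q hq) (hJz q hq),
        List.map_congr_left (g := fun _ => (0 : ℝ)) fun q hq => trans _ q
          (hokR q ((hmem q).2 (Or.inr (Or.inr hq)))) (hPz q hq)] at h1
      simp only [List.map_const', List.sum_replicate, smul_zero, add_zero] at h1
      exact_mod_cast mul_left_cancel₀ hMR.ne' (sub_eq_zero.1 h1)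
  obtain ⟨R', hR', hmR', hext⟩ := stack hne hF hG hM (J.map fun q => (q, C ∩ baseOf q)) p hokp
    (fun _ _ _ => hpM)
    (by
      intro a ha μ hμ
      obtain ⟨b, hb, hbase⟩ := exists_baseOf hokp.ne_nil
      rw [hokp.equivK a ha b hb μ hμ, ← hbase, ← hCp μ hμ, hsumC C hC hCY μ, List.map_map]
      rfl)
    (by
      simp only [List.mem_map]
      rintro _ ⟨q, hq, rfl⟩
      obtain ⟨a, ha, hbase⟩ := exists_baseOf (hokJ q hq).ne_nil
      exact ⟨hokJ q hq, hC.inter (hclopen q (hokJ q hq)),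
        ⟨a, ha, hbase ▸ Set.inter_subset_right⟩,
        (abs_le.1 (hR q ((hmem q).2 (Or.inr (Or.inl hq)))).2).1, hJ q hq⟩)
  have hJmap : (J.map fun q => (q, C ∩ baseOf q)).map Prod.fst = J := by
    simp [Function.comp_def]
  rw [hJmap] at hext
  refine ⟨R' ++ P, fun c hc => ?_, fun x => ?_, ?_⟩
  · rcases List.mem_append.1 hc with hc | hc
    · exact hR' c hc
    · exact hR c ((hmem c).2 (Or.inr (Or.inr hc)))
  · rw [List.flatten_append, mult_append, hmR' x, hJmap, ← hmult x, add_assoc]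
  · have h1 : numExt U V M R = numExt U V M (p :: (J ++ P)) := hperm.countP_eq _
    rw [h1]
    unfold numExt at hext ⊢
    rw [List.countP_append, List.countP_cons, List.countP_append,
      if_pos (by simp [hpM, hM.le])]
    omega

/-- Any list of compatible columns forming a partition can be cut and stacked into balanced ones, by
induction on the maximal imbalance and on the number of columns attaining it. -/
theorem exists_balanced (hne : K.Nonempty) (hF : ∀ μ ∈ K, FullSupport μ) (hG : Good K)
    (hUV : ∀ μ ∈ K, μ U = μ V) (M : ℕ) : ∀ (n : ℕ) (R : List (List (Label T × Set X))),
    (∀ c ∈ R, Ok T U V c ∧ |bal U V c| ≤ M) → (∀ x, mult x R.flatten = 1) →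
    numExt U V M R ≤ n →
    ∃ R' : List (List (Label T × Set X)), (∀ c ∈ R', Ok T U V c ∧ bal U V c = 0) ∧
      (∀ x, mult x R'.flatten = 1) := by
  induction M with
  | zero =>
    intro _ R hR hm _
    refine ⟨R, fun c hc => ⟨(hR c hc).1, ?_⟩, hm⟩
    simpa using (hR c hc).2
  | succ M ihM =>
    intro n
    induction n with
    | zero =>
      intro R hR hm h
      refine ihM _ R (fun c hc => ⟨(hR c hc).1, ?_⟩) hm le_rfl
      rw [Nat.le_zero, numExt, List.countP_eq_zero] at h
      have h1 := h c hc
      have h2 := (hR c hc).2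
      simp only [decide_eq_true_eq] at h1
      push_cast at h1 h2
      omega
    | succ n ihn =>
      intro R hR hm h
      by_cases hex : ∃ c ∈ R, |bal U V c| = (M + 1 : ℕ)
      · obtain ⟨p, hp, hpM⟩ := hex
        have hM : (0 : ℤ) < (M + 1 : ℕ) := by positivity
        rcases (abs_eq hM.le).1 hpM with h1 | h1
        · obtain ⟨R', hR', hm', hlt⟩ := step hne hF hG hUV hM R hR hm hp h1
          exact ihn R' hR' hm' (by omega)
        · obtain ⟨R', hR', hm', hlt⟩ := step (U := V) (V := U) hne hF hG
            (fun μ hμ => (hUV μ hμ).symm) hM R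
            (fun c hc => ⟨(hR c hc).1.swap, by rw [bal_swap, abs_neg]; exact (hR c hc).2⟩) hm hp
            (by rw [bal_swap, h1, neg_neg])
          refine ihn R' (fun c hc => ⟨(hR' c hc).1.swap, ?_⟩) hm' ?_
          · rw [bal_swap, abs_neg]
            exact (hR' c hc).2
          · rw [numExt_swap, numExt_swap (U := U) (V := V)] at hlt
            omega
      · push Not at hex
        refine ihM _ R (fun c hc => ⟨(hR c hc).1, ?_⟩) hm le_rfl
        have h1 := hex c hc
        have h2 := (hR c hc).2
        push_cast at h1 h2
        omega

end Columns

/-! ### From lists of columns to KR-partitions -/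

section Assemble

open Classical in
theorem pairwise_of_countP_le_one {α : Type*} (P : α → Prop) (l : List α)
    (h : l.countP (fun a => decide (P a)) ≤ 1) : l.Pairwise fun a b => ¬(P a ∧ P b) := by
  induction l with
  | nil => simp
  | cons a l ih =>
    rw [List.countP_cons] at h
    refine List.pairwise_cons.2 ⟨fun b hb hab => ?_, ih (by omega)⟩
    have : 0 < l.countP (fun a => decide (P a)) :=
      List.countP_pos_iff.2 ⟨b, hb, by simpa using hab.2⟩
    simp only [hab.1, decide_true, if_true] at h
    omega

open Classical in
theorem card_eq_countP {α : Type*} (P : α → Prop) (l : List α) (n : ℕ) (hn : n = l.length) :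
    Nat.card {j : Fin n // P (l[j.1]'(hn ▸ j.2))} = l.countP fun a => decide (P a) := by
  subst hn
  rw [Nat.card_eq_fintype_card, Fintype.card_subtype]
  induction l with
  | nil => simp
  | cons a l ih =>
    refine (Fin.card_filter_univ_succ (n := l.length) fun j => P ((a :: l)[j.1]'j.2)).trans ?_
    rw [List.countP_cons, ← ih]
    simp only [List.getElem_cons_succ, Fin.val_succ, Fin.val_zero, List.getElem_cons_zero,
      decide_eq_true_eq]
    split_ifs <;> rfl

/-- The entries of the concatenation of the lists `g (idx 0), g (idx 1), …`. -/
theorem getElem_flatMap_ofFn {α β : Type*} (g : α → List β) {m : ℕ} (idx : Fin m → α)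
    (k : Fin m) (j : ℕ) (hj : j < (g (idx k)).length) :
    ∃ h : (∑ l ∈ Finset.Iio k, (g (idx l)).length) + j < ((List.ofFn idx).flatMap g).length,
      ((List.ofFn idx).flatMap g)[(∑ l ∈ Finset.Iio k, (g (idx l)).length) + j] =
        (g (idx k))[j] := by
  have hk : k.1 < (List.ofFn idx).length := by simp
  have hsplit : (List.ofFn idx).flatMap g = ((List.ofFn idx).take k).flatMap g ++
      (g (idx k) ++ ((List.ofFn idx).drop (k + 1)).flatMap g) := by
    conv_lhs => rw [← List.take_append_drop k.1 (List.ofFn idx), List.drop_eq_getElem_cons hk]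
    simp
  have hlen : (((List.ofFn idx).take k).flatMap g).length =
      ∑ l ∈ Finset.Iio k, (g (idx l)).length := by
    rw [List.length_flatMap, List.map_take, List.map_ofFn, List.sum_take_ofFn]
    apply Finset.sum_congr _ fun _ _ => rfl
    ext l
    simp
  have hlt : (∑ l ∈ Finset.Iio k, (g (idx l)).length) + j <
      ((List.ofFn idx).flatMap g).length := by
    rw [hsplit, List.length_append, List.length_append, hlen]
    omega
  refine ⟨hlt, ?_⟩
  simp only [hsplit, ← hlen]
  rw [List.getElem_append_right (by omega), List.getElem_append_left (by omega)]
  simp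

variable {X : Type*} [TopologicalSpace X] [MeasurableSpace X]
  {K : Set (ProbabilityMeasure X)} {T : KRPartition X K}

theorem length_colLabels (i : Fin T.numCols) : (colLabels T i).length = T.height i + 1 := by
  simp [colLabels]

theorem Valid.length_pos {c : List (Label T × Set X)} (hc : Valid T c) : 0 < c.length :=
  List.length_pos_iff.2 hc.ne_nil

/-- The KR-partition whose columns are the given lists. -/
def ofColumns (R : List (List (Label T × Set X))) (hR : ∀ c ∈ R, Valid T c)
    (hm : ∀ x, mult x R.flatten = 1) : KRPartition X K where
  numCols := R.length
  height i := R[i].length - 1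
  atom i j := (R[i][j.1]'(by
    have := (hR _ (List.getElem_mem i.2)).length_pos
    have := j.2
    simp only [Fin.getElem_fin] at *
    omega)).2
  clopen i j := (hR _ (List.getElem_mem i.2)).clopen _ (List.getElem_mem _)
  equivK i j j' := (hR _ (List.getElem_mem i.2)).equivK _ (List.getElem_mem _) _
    (List.getElem_mem _)
  partition x := by
    classical
    have hx := hm x
    unfold mult at hx
    obtain ⟨a, ha, hxa⟩ := List.countP_pos_iff.1 (by rw [hx]; exact one_pos)
    obtain ⟨c, hc, hac⟩ := List.mem_flatten.1 ha
    obtain ⟨i, hi, rfl⟩ := List.getElem_of_mem hc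
    obtain ⟨j, hj, rfl⟩ := List.getElem_of_mem hac
    refine ⟨⟨⟨i, hi⟩, ⟨j, ?_⟩⟩, by simpa using hxa, ?_⟩
    · simp only [Fin.getElem_fin]
      omega
    rintro ⟨⟨i', hi'⟩, ⟨j', hj'⟩⟩ hx'
    have hpw := pairwise_of_countP_le_one (fun a : Label T × Set X => x ∈ a.2) _ hx.le
    rw [List.pairwise_flatten] at hpw
    simp only [Fin.getElem_fin] at hj' hx'
    have hj'' : j' < R[i'].length := by
      have := (hR _ (List.getElem_mem hi')).length_pos
      omega
    have hxa' : x ∈ (R[i][j]).2 := by simpa using hxa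
    have hii : i' = i := by
      have h := List.pairwise_iff_getElem.1 hpw.2
      rcases lt_trichotomy i' i with hlt | heq | hlt
      · exact absurd ⟨hx', hxa'⟩ (h i' i hi' hi hlt _ (List.getElem_mem _) _ (List.getElem_mem _))
      · exact heq
      · exact absurd ⟨hxa', hx'⟩ (h i i' hi hi' hlt _ (List.getElem_mem _) _ (List.getElem_mem _))
    subst hii
    have hjj : j' = j := by
      have h := List.pairwise_iff_getElem.1 (hpw.1 _ hc)
      rcases lt_trichotomy j' j with hlt | heq | hlt
      · exact absurd ⟨hx', hxa'⟩ (h j' j hj'' hj hlt)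
      · exact heq
      · exact absurd ⟨hxa', hx'⟩ (h j j' hj hj'' hlt)
    subst hjj
    rfl

/-- The word of column indices of a cut-and-stacked column, in the form used by
`KRPartition.Refines`. -/
theorem Valid.exists_word {col : List (Label T × Set X)} (hc : Valid T col) :
    ∃ (m : ℕ) (idx : Fin (m + 1) → Fin T.numCols),
      col.length = ∑ k, (T.height (idx k) + 1) ∧
      ∀ (k : Fin (m + 1)) (j : Fin (T.height (idx k) + 1)),
        ∃ h : (∑ l ∈ Finset.Iio k, (T.height (idx l) + 1)) + (j : ℕ) < col.length,
          col[(∑ l ∈ Finset.Iio k, (T.height (idx l) + 1)) + (j : ℕ)].1 = ⟨idx k, j⟩ := by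
  obtain ⟨w, hw, hword⟩ := hc.word
  obtain ⟨m, hm⟩ : ∃ m, w.length = m + 1 :=
    Nat.exists_eq_succ_of_ne_zero (by simpa using hw)
  obtain ⟨idx, rfl⟩ : ∃ idx : Fin (m + 1) → Fin T.numCols, w = List.ofFn idx :=
    ⟨fun k => w[k.1]'(by omega), by
      exact List.ext_getElem (by simp [hm]) (by intros; simp only [List.getElem_ofFn])⟩
  have hlen : col.length = ((List.ofFn idx).flatMap (colLabels T)).length := by
    rw [← hword, List.length_map]
  refine ⟨m, idx, ?_, fun k j => ?_⟩
  · rw [hlen, List.length_flatMap, List.map_ofFn, List.sum_ofFn]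
    simp [length_colLabels]
  · obtain ⟨h1, h2⟩ := getElem_flatMap_ofFn (colLabels T) idx k j
      (by rw [length_colLabels]; exact j.2)
    simp only [length_colLabels] at h1 h2
    refine ⟨by omega, ?_⟩
    have h3 : col[(∑ l ∈ Finset.Iio k, (T.height (idx l) + 1)) + (j : ℕ)].1 =
        (col.map Prod.fst)[(∑ l ∈ Finset.Iio k, (T.height (idx l) + 1)) + (j : ℕ)]'(by
          rw [List.length_map]; omega) := by simp
    rw [h3]
    simp only [hword, h2]
    simp [colLabels]

theorem ofColumns_refines (R : List (List (Label T × Set X))) (hR : ∀ c ∈ R, Valid T c)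
    (hm : ∀ x, mult x R.flatten = 1) : (ofColumns R hR hm).Refines T := by
  have hv : ∀ i : Fin R.length, Valid T R[i] := fun i => hR _ (List.getElem_mem i.2)
  have hsub : ∀ (i : Fin R.length) (n : ℕ) (hn : n < R[i].length) (l : Label T),
      (R[i][n]).1 = l → (R[i][n]).2 ⊆ T.atom l.1 l.2 := by
    rintro i n hn _ rfl
    exact (hv i).sub _ (List.getElem_mem _)
  refine ⟨?_, ?_, fun c => ?_⟩
  · refine Set.iUnion_subset fun i : Fin R.length => ?_
    obtain ⟨m, idx, hlen, hget⟩ := (hv i).exists_word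
    obtain ⟨h1, h2⟩ := hget 0 0
    have hpos : (∑ l ∈ Finset.Iio (0 : Fin (m + 1)), (T.height (idx l) + 1)) +
        ((0 : Fin (T.height (idx 0) + 1)) : ℕ) = 0 := by
      have : Finset.Iio (0 : Fin (m + 1)) = ∅ := by
        ext l
        simp
      simp [this]
    simp only [hpos] at h1 h2
    exact (hsub i 0 h1 _ h2).trans (Set.subset_iUnion (fun i => T.atom i 0) (idx 0))
  · refine Set.iUnion_subset fun i : Fin R.length => ?_
    obtain ⟨m, idx, hlen, hget⟩ := (hv i).exists_word
    obtain ⟨h1, h2⟩ := hget (Fin.last m) (Fin.last _)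
    have hpos : (∑ l ∈ Finset.Iio (Fin.last m), (T.height (idx l) + 1)) +
        ((Fin.last (T.height (idx (Fin.last m)))) : ℕ) = R[i].length - 1 := by
      have : (Finset.univ : Finset (Fin (m + 1))) =
          insert (Fin.last m) (Finset.Iio (Fin.last m)) := by
        ext l
        simpa only [Finset.mem_univ, Finset.mem_insert, Finset.mem_Iio, true_iff] using
          (Fin.le_last l).eq_or_lt
      rw [hlen, this, Finset.sum_insert (by simp), Fin.val_last]
      omega
    simp only [hpos] at h1 h2
    exact (hsub i _ h1 _ h2).trans
      (Set.subset_iUnion (fun i => T.atom i (Fin.last _)) (idx (Fin.last m)))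
  · obtain ⟨m, idx, hlen, hget⟩ := (hv c).exists_word
    have hheight : (ofColumns R hR hm).height c + 1 = R[c].length :=
      Nat.sub_add_cancel (hv c).length_pos
    refine ⟨m, idx, fun k j => (R[c][(∑ l ∈ Finset.Iio k, (T.height (idx l) + 1)) +
      (j : ℕ)]'(hget k j).1).2, fun k j => ?_, hheight.trans hlen, fun k j hlt => rfl⟩
    exact hsub c _ (hget k j).1 ⟨idx k, j⟩ (hget k j).2

end Assemble

end DynSimplex

theorem exists_refinement_compatible_balanced
    {X : Type*} [TopologicalSpace X] [CompactSpace X]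
    [TopologicalSpace.MetrizableSpace X] [TotallyDisconnectedSpace X] [PerfectSpace X]
    [Nonempty X] [MeasurableSpace X] [BorelSpace X]
    (K : Set (MeasureTheory.ProbabilityMeasure X)) (hK : DynSimplex.DynamicalSimplex K)
    (T : DynSimplex.KRPartition X K)
    (U V : Set X) (hU : IsClopen U) (hV : IsClopen V) (hUV : ∀ μ ∈ K, μ U = μ V) :
    ∃ S : DynSimplex.KRPartition X K, S.Refines T ∧
      S.Compatible U ∧ S.Compatible V ∧
      ∀ i : Fin S.numCols,
        Nat.card {j : Fin (S.height i + 1) // S.atom i j ⊆ U} =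
        Nat.card {j : Fin (S.height i + 1) // S.atom i j ⊆ V} := by
  obtain ⟨hne, -, -, hAF, hG, -⟩ := hK
  have hF : ∀ μ ∈ K, DynSimplex.FullSupport μ := fun μ hμ => (hAF μ hμ).2
  obtain ⟨R₀, hR₀, hm₀⟩ := DynSimplex.exists_ok hF hG T hU hV
  obtain ⟨M, hM⟩ : ∃ M : ℕ, ∀ c ∈ R₀, |DynSimplex.bal U V c| ≤ M := by
    refine ⟨(R₀.map fun c => (DynSimplex.bal U V c).natAbs).sum, fun c hc => ?_⟩
    rw [Int.abs_eq_natAbs]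
    have h : (DynSimplex.bal U V c).natAbs ≤
        (R₀.map fun c => (DynSimplex.bal U V c).natAbs).sum :=
      List.le_sum_of_mem (List.mem_map.2 ⟨c, hc, rfl⟩)
    exact_mod_cast h
  obtain ⟨R, hR, hm⟩ := DynSimplex.exists_balanced hne hF hG hUV M _ R₀
    (fun c hc => ⟨hR₀ c hc, hM c hc⟩) hm₀ le_rfl
  have hv : ∀ c ∈ R, DynSimplex.Valid T c := fun c hc => (hR c hc).1.toValid
  refine ⟨DynSimplex.ofColumns R hv hm, DynSimplex.ofColumns_refines R hv hm, fun i j => ?_,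
    fun i j => ?_, fun i => ?_⟩
  · exact (hR _ (List.getElem_mem i.2)).1.compU _ (List.getElem_mem _)
  · exact (hR _ (List.getElem_mem i.2)).1.compV _ (List.getElem_mem _)
  · have hc : R[i.1]'i.2 ∈ R := List.getElem_mem i.2
    have hlen : (DynSimplex.ofColumns R hv hm).height i + 1 = (R[i.1]'i.2).length :=
      Nat.sub_add_cancel (hv _ hc).length_pos
    have key : ∀ W : Set X, Nat.card {j : Fin ((DynSimplex.ofColumns R hv hm).height i + 1) //
        (DynSimplex.ofColumns R hv hm).atom i j ⊆ W} = DynSimplex.numIn W (R[i.1]'i.2) :=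
      fun W => DynSimplex.card_eq_countP (fun a => a.2 ⊆ W) (R[i.1]'i.2) _ hlen
    have hbal := (hR _ hc).2
    rw [key, key]
    unfold DynSimplex.bal at hbal
    omega
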